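/- In the damped model, the fixed points of u and of f coincide: for x ∈ Σ, u(x) = x if and only if f(x) = x. Moreover, there exists ε > 0, depending only on C, d and γ, such that whenever L⁺(g₁) + L⁺(g₂) ≤ ε, the map f has a unique fixed point x* (which is also the unique fixed point of u) and for every x ∈ Σ the iterates f^s(x) converge to x* as s → ∞. -/

import Mathlib

open Set Matrix Filter Topology

/-- A weight function for the damped model: either admissible or the constant `1`. -/
def IsWeight (g g' : ℝ → ℝ) : Prop :=
  (∀ x ∈ Set.Icc (0:ℝ) 1, HasDerivWithinAt g (g' x) (Set.Icc (0:ℝ) 1) x) ∧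
  ContinuousOn g' (Set.Icc (0:ℝ) 1) ∧
  g 0 = 1 ∧
  (∀ x ∈ Set.Icc (0:ℝ) 1, 0 < g x) ∧
  ((∀ x ∈ Set.Icc (0:ℝ) 1, 0 < g' x) ∨
    ((∀ x ∈ Set.Icc (0:ℝ) 1, g x = 1) ∧ ∀ x ∈ Set.Icc (0:ℝ) 1, g' x = 0))

/-- The set of values `g'(x)/g(x)` for `x ∈ [0,1]`; its maximum is `L⁺(g)`. -/
def ratioSet (g g' : ℝ → ℝ) : Set ℝ := (fun x => g' x / g x) '' Set.Icc (0:ℝ) 1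

/-- The damped transition matrix. -/
noncomputable def Md {n : ℕ} (C : Matrix (Fin n) (Fin n) ℝ) (d : Fin n → ℝ)
    (γ : ℝ) (g₁ g₂ : ℝ → ℝ) (x : Fin n → ℝ) : Matrix (Fin n) (Fin n) ℝ :=
  Matrix.of fun i j =>
    γ * (C i j * g₁ (x j) / ∑ k, C i k * g₁ (x k)) +
    (1 - γ) * (d j * g₂ (x j) / ∑ k, d k * g₂ (x k))

/-- The map `f(x) = x · M(x)` of the damped model. -/
noncomputable def fd {n : ℕ} (C : Matrix (Fin n) (Fin n) ℝ) (d : Fin n → ℝ)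
    (γ : ℝ) (g₁ g₂ : ℝ → ℝ) (x : Fin n → ℝ) : Fin n → ℝ :=
  Matrix.vecMul x (Md C d γ g₁ g₂ x)

/-!
Measure everything in the `ℓ¹` norm on `Σ`. Zero-sum vectors do not see the rank-one teleportation
part of a damped kernel `γ P + (1 - γ) 𝟙 v`, so the kernel contracts differences of probability
vectors by the factor `γ`. On the other hand, reweighting and renormalizing a row is `2`-Lipschitz
in the logarithms of the weights, so each row of `M` is Lipschitz in the state `x` with constant
`2 (γ L⁺(g₁) + (1 - γ) L⁺(g₂))`. Hence `f` is a contraction of the complete space `Σ` as soon as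
`γ + 2 (γ L⁺(g₁) + (1 - γ) L⁺(g₂)) < 1`, and Banach's fixed point theorem applies.
-/

open scoped NNReal

local notation "‖" x "‖₁" => ‖WithLp.toLp 1 x‖

section Contraction

theorem exists_fixedPt_tendsto_iterate_of_lipschitzOnWith {X : Type*} [MetricSpace X]
    {s : Set X} (hs : IsComplete s) (hne : s.Nonempty) {f : X → X} (hf : MapsTo f s s)
    {K : ℝ≥0} (hK : K < 1) (hlip : LipschitzOnWith K f s) :
    ∃ z ∈ s, f z = z ∧ (∀ y ∈ s, f y = y → y = z) ∧
      ∀ x ∈ s, Tendsto (fun k : ℕ => f^[k] x) atTop (𝓝 z) := by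
  have hcontr : ContractingWith K (hf.restrict f s s) := ⟨hK, hlip.mapsToRestrict hf⟩
  have hunique : ∀ y ∈ s, ∀ z ∈ s, f y = y → f z = z → y = z := fun y hy z hz hfy hfz =>
    congrArg Subtype.val <| hcontr.fixedPoint_unique' (x := ⟨y, hy⟩) (y := ⟨z, hz⟩)
      (Subtype.ext hfy) (Subtype.ext hfz)
  have hlimit (x) (hx : x ∈ s) := hcontr.exists_fixedPoint' hs hf hx (edist_ne_top _ _)
  obtain ⟨x₀, hx₀⟩ := hne
  obtain ⟨z, hz, hfz, -⟩ := hlimit x₀ hx₀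
  refine ⟨z, hz, hfz, fun y hy hfy => hunique y hy z hz hfy hfz, fun x hx => ?_⟩
  obtain ⟨y, hy, hfy, hxy, -⟩ := hlimit x hx
  rwa [← hunique y hy z hz hfy hfz]

theorem exists_fixedPt_tendsto_iterate_of_l1Norm_sub_le {ι : Type*} [Fintype ι]
    {s : Set (ι → ℝ)} (hs : IsClosed s) (hne : s.Nonempty) {f : (ι → ℝ) → ι → ℝ}
    (hf : MapsTo f s s) {K : ℝ} (hK : K < 1)
    (hlip : ∀ x ∈ s, ∀ y ∈ s, ‖f x - f y‖₁ ≤ K * ‖x - y‖₁) :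
    ∃ z ∈ s, f z = z ∧ (∀ y ∈ s, f y = y → y = z) ∧
      ∀ x ∈ s, Tendsto (fun k : ℕ => f^[k] x) atTop (𝓝 z) := by
  let e := PiLp.homeomorph 1 (fun _ : ι => ℝ)
  let F : PiLp 1 (fun _ : ι => ℝ) → PiLp 1 (fun _ : ι => ℝ) := e.symm ∘ f ∘ e
  have hlipF : LipschitzOnWith K.toNNReal F (e ⁻¹' s) :=
    LipschitzOnWith.of_dist_le' fun x hx y hy => by
      rw [dist_eq_norm, dist_eq_norm]
      exact hlip (e x) hx (e y) hy
  obtain ⟨z, hz, hFz, hunique, htendsto⟩ := exists_fixedPt_tendsto_iterate_of_lipschitzOnWith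
    (hs.preimage e.continuous).isComplete (hne.preimage e.surjective) (f := F)
    (fun x hx => hf hx) (Real.toNNReal_lt_one.2 hK) hlipF
  have hsemiconj : Function.Semiconj e F f := fun x => e.apply_symm_apply (f (e x))
  refine ⟨e z, hz, e.symm_apply_eq.1 hFz, fun y hy hfy => ?_, fun x hx => ?_⟩
  · exact e.symm_apply_eq.1 (hunique (e.symm y) hy (congrArg e.symm hfy))
  · refine ((e.continuous.tendsto z).comp (htendsto (e.symm x) hx)).congr fun k => ?_
    exact hsemiconj.iterate_right k (e.symm x)

end Contraction

section Normalization

theorem norm_normalize_sub_normalize_le {E : Type*} [NormedAddCommGroup E] [NormedSpace ℝ E]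
    (a b : E) :
    ‖NormedSpace.normalize a - NormedSpace.normalize b‖ ≤ 2 * ‖a - b‖ / max ‖a‖ ‖b‖ := by
  wlog hba : ‖b‖ ≤ ‖a‖ generalizing a b
  · simpa only [norm_sub_rev, max_comm] using this b a (le_of_not_ge hba)
  rw [max_eq_left hba]
  rcases eq_or_ne a 0 with rfl | ha
  · simp [norm_le_zero_iff.1 (hba.trans_eq norm_zero)]
  have ha' : ‖a‖ ≠ 0 := norm_ne_zero_iff.2 ha
  have hsplit : NormedSpace.normalize a - NormedSpace.normalize b =
      ‖a‖⁻¹ • (a - b + (‖b‖ - ‖a‖) • NormedSpace.normalize b) := by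
    rw [sub_smul, NormedSpace.norm_smul_normalize, sub_add_sub_cancel, smul_sub,
      inv_smul_smul₀ ha']
    rfl
  have hnormalize : ‖NormedSpace.normalize b‖ ≤ 1 := by
    rcases eq_or_ne b 0 with rfl | hb
    · simp
    · exact (NormedSpace.norm_normalize hb).le
  have hnorm : |‖b‖ - ‖a‖| ≤ ‖a - b‖ := norm_sub_rev b a ▸ abs_norm_sub_norm_le b a
  calc ‖NormedSpace.normalize a - NormedSpace.normalize b‖
      = ‖a‖⁻¹ * ‖a - b + (‖b‖ - ‖a‖) • NormedSpace.normalize b‖ := by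
        rw [hsplit, norm_smul, norm_inv, norm_norm]
    _ ≤ ‖a‖⁻¹ * (‖a - b‖ + ‖a - b‖ * 1) := by
        gcongr
        refine (norm_add_le _ _).trans ?_
        rw [norm_smul, Real.norm_eq_abs]
        gcongr
    _ = 2 * ‖a - b‖ / ‖a‖ := by ring

end Normalization

section Tilt

theorem abs_sub_le_max_mul_abs_log_sub_log {a b : ℝ} (ha : 0 < a) (hb : 0 < b) :
    |a - b| ≤ max a b * |Real.log a - Real.log b| := by
  wlog hba : b ≤ a generalizing a b
  · simpa only [abs_sub_comm, max_comm] using this hb ha (le_of_not_ge hba)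
  have hlog : 1 - b / a ≤ Real.log a - Real.log b := by
    rw [← Real.log_div ha.ne' hb.ne', ← inv_div]
    exact Real.one_sub_inv_le_log_of_pos (div_pos ha hb)
  rw [max_eq_left hba, abs_of_nonneg (sub_nonneg.2 hba),
    abs_of_nonneg (sub_nonneg.2 (Real.log_le_log hb hba))]
  calc a - b = a * (1 - b / a) := by field_simp
    _ ≤ a * (Real.log a - Real.log b) := by gcongr

variable {ι : Type*} [Fintype ι]

theorem l1Norm_eq_sum (x : ι → ℝ) : ‖x‖₁ = ∑ i, |x i| :=
  PiLp.norm_eq_of_L1 _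

theorem l1Norm_eq_sum_of_nonneg {x : ι → ℝ} (hx : 0 ≤ x) : ‖x‖₁ = ∑ i, x i := by
  simp only [l1Norm_eq_sum, abs_of_nonneg (hx _)]

/-- The probability vector obtained from the nonnegative vector `c` by reweighting its entries with
the weights `w` and renormalizing. It is `0` if `∑ k, c k * w k = 0`. -/
noncomputable def tilt (c w : ι → ℝ) : ι → ℝ :=
  fun j => c j * w j / ∑ k, c k * w k

variable {c w p q : ι → ℝ}

theorem tilt_mem_stdSimplex (hc : 0 ≤ c) (hc_pos : ∃ j, 0 < c j) (hw : ∀ j, 0 < w j) :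
    tilt c w ∈ stdSimplex ℝ ι := by
  have hcw : ∀ j, 0 ≤ c j * w j := fun j => mul_nonneg (hc j) (hw j).le
  obtain ⟨j, hj⟩ := hc_pos
  have hsum : 0 < ∑ k, c k * w k :=
    Finset.sum_pos' (fun k _ => hcw k) ⟨j, Finset.mem_univ j, mul_pos hj (hw j)⟩
  refine ⟨fun k => div_nonneg (hcw k) hsum.le, ?_⟩
  simp only [tilt]
  rw [← Finset.sum_div, div_self hsum.ne']

theorem toLp_tilt (hc : 0 ≤ c) (hw : 0 ≤ w) :
    WithLp.toLp 1 (tilt c w) = NormedSpace.normalize (WithLp.toLp 1 (c * w)) := by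
  ext j
  simp [NormedSpace.normalize, l1Norm_eq_sum_of_nonneg (mul_nonneg hc hw), tilt, div_eq_inv_mul]

theorem l1Norm_mul_sub_mul_le (hc : 0 ≤ c) (hp : ∀ j, 0 < p j) (hq : ∀ j, 0 < q j) :
    ‖c * p - c * q‖₁ ≤ max ‖c * p‖₁ ‖c * q‖₁ * ‖Real.log ∘ p - Real.log ∘ q‖₁ := by
  have hentry : ∀ {r : ι → ℝ}, (∀ j, 0 < r j) → ∀ j, c j * r j ≤ ‖c * r‖₁ := fun hr j => by
    have hcr : 0 ≤ c * _ := mul_nonneg hc fun j => (hr j).le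
    rw [l1Norm_eq_sum_of_nonneg hcr]
    exact Finset.single_le_sum (fun k _ => hcr k) (Finset.mem_univ j)
  rw [l1Norm_eq_sum (c * p - c * q), l1Norm_eq_sum (_ - _), Finset.mul_sum]
  refine Finset.sum_le_sum fun j _ => ?_
  calc |c j * p j - c j * q j|
      = c j * |p j - q j| := by rw [← mul_sub, abs_mul, abs_of_nonneg (hc j)]
    _ ≤ c j * (max (p j) (q j) * |Real.log (p j) - Real.log (q j)|) :=
        mul_le_mul_of_nonneg_left (abs_sub_le_max_mul_abs_log_sub_log (hp j) (hq j)) (hc j)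
    _ = max (c j * p j) (c j * q j) * |Real.log (p j) - Real.log (q j)| := by
        rw [← mul_assoc, mul_max_of_nonneg _ _ (hc j)]
    _ ≤ max ‖c * p‖₁ ‖c * q‖₁ * |Real.log (p j) - Real.log (q j)| := by
        gcongr
        exacts [hentry hp j, hentry hq j]

theorem l1Norm_tilt_sub_tilt_le (hc : 0 ≤ c) (hp : ∀ j, 0 < p j) (hq : ∀ j, 0 < q j) :
    ‖tilt c p - tilt c q‖₁ ≤ 2 * ‖Real.log ∘ p - Real.log ∘ q‖₁ := by
  rw [WithLp.toLp_sub, toLp_tilt hc fun j => (hp j).le, toLp_tilt hc fun j => (hq j).le]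
  refine (norm_normalize_sub_normalize_le _ _).trans ?_
  refine div_le_of_le_mul₀ (by positivity) (by positivity) ?_
  rw [← WithLp.toLp_sub]
  linarith [l1Norm_mul_sub_mul_le hc hp hq]

theorem l1Norm_comp_sub_comp_le {φ : ℝ → ℝ} {s : Set ℝ} {K : ℝ≥0} (hφ : LipschitzOnWith K φ s)
    {x y : ι → ℝ} (hx : ∀ i, x i ∈ s) (hy : ∀ i, y i ∈ s) :
    ‖φ ∘ x - φ ∘ y‖₁ ≤ K * ‖x - y‖₁ := by
  rw [l1Norm_eq_sum, l1Norm_eq_sum, Finset.mul_sum]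
  exact Finset.sum_le_sum fun i _ => hφ.dist_le_mul _ (hx i) _ (hy i)

theorem l1Norm_tilt_comp_sub_tilt_comp_le {g : ℝ → ℝ} {s : Set ℝ} {K : ℝ≥0}
    (hg : ∀ t ∈ s, 0 < g t) (hlip : LipschitzOnWith K (Real.log ∘ g) s) (hc : 0 ≤ c)
    {x y : ι → ℝ} (hx : ∀ i, x i ∈ s) (hy : ∀ i, y i ∈ s) :
    ‖tilt c (g ∘ x) - tilt c (g ∘ y)‖₁ ≤ 2 * K * ‖x - y‖₁ := by
  have htilt := l1Norm_tilt_sub_tilt_le hc (fun i => hg _ (hx i)) (fun i => hg _ (hy i))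
  have hlog := l1Norm_comp_sub_comp_le hlip hx hy
  exact htilt.trans <| (mul_le_mul_of_nonneg_left hlog zero_le_two).trans_eq (mul_assoc _ _ _).symm

end Tilt

section Kernel

variable {ι : Type*} [Fintype ι]

theorem l1Norm_vecMul_le {κ : Type*} [Fintype κ] {M : Matrix ι κ ℝ} {a : ℝ}
    (hM : ∀ i, ‖M i‖₁ ≤ a) (z : ι → ℝ) : ‖z ᵥ* M‖₁ ≤ a * ‖z‖₁ := by
  rw [vecMul_eq_sum, WithLp.toLp_sum, l1Norm_eq_sum z, Finset.mul_sum]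
  refine norm_sum_le_of_le _ fun i _ => ?_
  rw [WithLp.toLp_smul, norm_smul, Real.norm_eq_abs, mul_comm]
  exact mul_le_mul_of_nonneg_right (hM i) (abs_nonneg _)

/-- The Google matrix: follow `P` with probability `γ`, otherwise jump to a state drawn from `v`. -/
def dampedKernel (γ : ℝ) (P : Matrix ι ι ℝ) (v : ι → ℝ) : Matrix ι ι ℝ :=
  γ • P + (1 - γ) • vecMulVec 1 v

variable {γ : ℝ} {P Q : Matrix ι ι ℝ} {v w x y z : ι → ℝ}

theorem l1Norm_dampedKernel_row_sub_le (hγ0 : 0 ≤ γ) (hγ1 : γ ≤ 1) (i : ι) :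
    ‖(dampedKernel γ P v - dampedKernel γ Q w) i‖₁ ≤
      γ * ‖P i - Q i‖₁ + (1 - γ) * ‖v - w‖₁ := by
  have hrow : (dampedKernel γ P v - dampedKernel γ Q w) i =
      γ • (P i - Q i) + (1 - γ) • (v - w) := by
    ext j
    simp only [dampedKernel, vecMulVec, Matrix.sub_apply, Matrix.add_apply, Matrix.smul_apply,
      of_apply, Pi.one_apply, Pi.add_apply, Pi.smul_apply, Pi.sub_apply, smul_eq_mul]
    ring
  rw [hrow, WithLp.toLp_add, WithLp.toLp_smul, WithLp.toLp_smul]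
  refine (norm_add_le _ _).trans_eq ?_
  rw [norm_smul_of_nonneg hγ0, norm_smul_of_nonneg (sub_nonneg.2 hγ1)]

theorem vecMul_dampedKernel_of_sum_eq_zero (hz : ∑ i, z i = 0) :
    z ᵥ* dampedKernel γ P v = γ • (z ᵥ* P) := by
  rw [dampedKernel, vecMul_add, vecMul_smul, vecMul_smul, vecMul_vecMulVec, dotProduct_one, hz,
    zero_smul, smul_zero, add_zero]

variable [DecidableEq ι]

theorem vecMul_mem_stdSimplex {M : Matrix ι ι ℝ} (hM : M ∈ rowStochastic ℝ ι)
    (hx : x ∈ stdSimplex ℝ ι) : x ᵥ* M ∈ stdSimplex ℝ ι := by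
  refine ⟨nonneg_vecMul_of_mem_rowStochastic hM hx.1, ?_⟩
  rw [← dotProduct_one]
  exact vecMul_dotProduct_one_eq_one_rowStochastic hM ((dotProduct_one x).trans hx.2)

theorem mem_rowStochastic_of_forall_mem_stdSimplex (hP : ∀ i, P i ∈ stdSimplex ℝ ι) :
    P ∈ rowStochastic ℝ ι :=
  mem_rowStochastic_iff_sum.2 ⟨fun i => (hP i).1, fun i => (hP i).2⟩

theorem dampedKernel_mem_rowStochastic (hγ0 : 0 ≤ γ) (hγ1 : γ ≤ 1) (hP : P ∈ rowStochastic ℝ ι)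
    (hv : v ∈ stdSimplex ℝ ι) : dampedKernel γ P v ∈ rowStochastic ℝ ι := by
  have hjump : vecMulVec 1 v ∈ rowStochastic ℝ ι :=
    mem_rowStochastic_of_forall_mem_stdSimplex fun i => by
      rwa [show vecMulVec 1 v i = v from one_smul ℝ v]
  exact convex_rowStochastic hP hjump hγ0 (sub_nonneg.2 hγ1) (add_sub_cancel γ 1)

theorem l1Norm_vecMul_le_of_mem_rowStochastic (hP : P ∈ rowStochastic ℝ ι) (z : ι → ℝ) :
    ‖z ᵥ* P‖₁ ≤ ‖z‖₁ := by
  have hrow : ∀ i, ‖P i‖₁ ≤ 1 := fun i =>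
    ((l1Norm_eq_sum_of_nonneg (hP.1 i)).trans (sum_row_of_mem_rowStochastic hP i)).le
  simpa only [one_mul] using l1Norm_vecMul_le hrow z

theorem l1Norm_vecMul_dampedKernel_sub_le {a b : ℝ} (hγ0 : 0 ≤ γ) (hγ1 : γ ≤ 1)
    (hP : P ∈ rowStochastic ℝ ι) (hPQ : ∀ i, ‖P i - Q i‖₁ ≤ a) (hvw : ‖v - w‖₁ ≤ b)
    (hx : x ∈ stdSimplex ℝ ι) (hy : y ∈ stdSimplex ℝ ι) :
    ‖x ᵥ* dampedKernel γ P v - y ᵥ* dampedKernel γ Q w‖₁ ≤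
      γ * ‖x - y‖₁ + (γ * a + (1 - γ) * b) := by
  have hsplit : x ᵥ* dampedKernel γ P v - y ᵥ* dampedKernel γ Q w =
      (x - y) ᵥ* dampedKernel γ P v + y ᵥ* (dampedKernel γ P v - dampedKernel γ Q w) := by
    rw [sub_vecMul, vecMul_sub, sub_add_sub_cancel]
  have hmass : ∑ i, (x - y) i = 0 := by
    simp only [Pi.sub_apply, Finset.sum_sub_distrib, hx.2, hy.2, sub_self]
  have hstate : ‖(x - y) ᵥ* dampedKernel γ P v‖₁ ≤ γ * ‖x - y‖₁ := by
    rw [vecMul_dampedKernel_of_sum_eq_zero hmass, WithLp.toLp_smul, norm_smul_of_nonneg hγ0]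
    exact mul_le_mul_of_nonneg_left (l1Norm_vecMul_le_of_mem_rowStochastic hP _) hγ0
  have hrow : ∀ i, ‖(dampedKernel γ P v - dampedKernel γ Q w) i‖₁ ≤ γ * a + (1 - γ) * b :=
    fun i => (l1Norm_dampedKernel_row_sub_le hγ0 hγ1 i).trans <| add_le_add
      (mul_le_mul_of_nonneg_left (hPQ i) hγ0) (mul_le_mul_of_nonneg_left hvw (sub_nonneg.2 hγ1))
  have hkernel := l1Norm_vecMul_le hrow y
  rw [l1Norm_eq_sum_of_nonneg hy.1, hy.2, mul_one] at hkernel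
  rw [hsplit, WithLp.toLp_add]
  exact (norm_add_le _ _).trans (add_le_add hstate hkernel)

end Kernel

section LogLipschitz

theorem lipschitzOnWith_log_comp {g g' : ℝ → ℝ} {s : Set ℝ} {K : ℝ≥0} (hs : Convex ℝ s)
    (hg : ∀ t ∈ s, HasDerivWithinAt g (g' t) s t) (hpos : ∀ t ∈ s, 0 < g t)
    (hK : ∀ t ∈ s, |g' t / g t| ≤ K) : LipschitzOnWith K (Real.log ∘ g) s :=
  hs.lipschitzOnWith_of_nnnorm_hasDerivWithin_le
    (fun t ht => (hg t ht).log (hpos t ht).ne') hK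

namespace IsWeight

variable {g g' : ℝ → ℝ}

theorem pos (hg : IsWeight g g') : ∀ t ∈ Icc (0 : ℝ) 1, 0 < g t :=
  hg.2.2.2.1

theorem deriv_nonneg (hg : IsWeight g g') : ∀ t ∈ Icc (0 : ℝ) 1, 0 ≤ g' t := by
  obtain ⟨-, -, -, -, hpos | ⟨-, hzero⟩⟩ := hg
  · exact fun t ht => (hpos t ht).le
  · exact fun t ht => (hzero t ht).ge

theorem nonneg_of_mem_ratioSet (hg : IsWeight g g') {r : ℝ} (hr : r ∈ ratioSet g g') :
    0 ≤ r := by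
  obtain ⟨t, ht, rfl⟩ := hr
  exact div_nonneg (hg.deriv_nonneg t ht) (hg.pos t ht).le

theorem lipschitzOnWith_log (hg : IsWeight g g') {K : ℝ≥0}
    (hK : (K : ℝ) ∈ upperBounds (ratioSet g g')) :
    LipschitzOnWith K (Real.log ∘ g) (Icc 0 1) :=
  lipschitzOnWith_log_comp (convex_Icc 0 1) hg.1 hg.pos fun t ht => by
    have hratio : g' t / g t ∈ ratioSet g g' := mem_image_of_mem _ ht
    rw [abs_of_nonneg (hg.nonneg_of_mem_ratioSet hratio)]
    exact hK hratio

end IsWeight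

end LogLipschitz

section DampedModel

theorem eq_iff_vecMul_eq_of_unique {ι : Type*} [Fintype ι] {M : Matrix ι ι ℝ} {s : Set (ι → ℝ)}
    {x π : ι → ℝ} (hx : x ∈ s) (hπ : π ᵥ* M = π) (hunique : ∀ v ∈ s, v ᵥ* M = v → v = π) :
    π = x ↔ x ᵥ* M = x :=
  ⟨fun h => h ▸ hπ, fun h => (hunique x hx h).symm⟩

variable {n : ℕ} {C : Matrix (Fin n) (Fin n) ℝ} {d : Fin n → ℝ} {γ : ℝ} {g₁ g₂ : ℝ → ℝ}

theorem Md_eq_dampedKernel (x : Fin n → ℝ) :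
    Md C d γ g₁ g₂ x =
      dampedKernel γ (of fun i => tilt (C i) (g₁ ∘ x)) (tilt d (g₂ ∘ x)) := by
  ext i j
  simp [Md, dampedKernel, tilt, vecMulVec]

variable (hC : ∀ i j, 0 ≤ C i j) (hrow : ∀ i, ∃ j, 0 < C i j) (hd : ∀ i, 0 ≤ d i)
  (hγ0 : 0 ≤ γ) (hγ1 : γ ≤ 1)
  (hg₁ : ∀ t ∈ Icc (0 : ℝ) 1, 0 < g₁ t) (hg₂ : ∀ t ∈ Icc (0 : ℝ) 1, 0 < g₂ t)

include hC hrow hg₁ in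
theorem tilt_rows_mem_rowStochastic {x : Fin n → ℝ} (hx : x ∈ stdSimplex ℝ (Fin n)) :
    (of fun i => tilt (C i) (g₁ ∘ x)) ∈ rowStochastic ℝ (Fin n) :=
  mem_rowStochastic_of_forall_mem_stdSimplex fun i =>
    tilt_mem_stdSimplex (hC i) (hrow i) fun j => hg₁ _ (mem_Icc_of_mem_stdSimplex hx j)

include hC hrow hd hγ0 hγ1 hg₁ hg₂ in
theorem fd_mem_stdSimplex (hd_pos : ∃ i, 0 < d i) {x : Fin n → ℝ}
    (hx : x ∈ stdSimplex ℝ (Fin n)) : fd C d γ g₁ g₂ x ∈ stdSimplex ℝ (Fin n) := by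
  rw [fd, Md_eq_dampedKernel]
  refine vecMul_mem_stdSimplex (dampedKernel_mem_rowStochastic hγ0 hγ1
    (tilt_rows_mem_rowStochastic hC hrow hg₁ hx) ?_) hx
  exact tilt_mem_stdSimplex hd hd_pos fun j => hg₂ _ (mem_Icc_of_mem_stdSimplex hx j)

include hC hrow hd hγ0 hγ1 hg₁ hg₂ in
theorem l1Norm_fd_sub_fd_le {K₁ K₂ : ℝ≥0} (hK₁ : LipschitzOnWith K₁ (Real.log ∘ g₁) (Icc 0 1))
    (hK₂ : LipschitzOnWith K₂ (Real.log ∘ g₂) (Icc 0 1)) {x y : Fin n → ℝ}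
    (hx : x ∈ stdSimplex ℝ (Fin n)) (hy : y ∈ stdSimplex ℝ (Fin n)) :
    ‖fd C d γ g₁ g₂ x - fd C d γ g₁ g₂ y‖₁ ≤
      (γ + 2 * (γ * K₁ + (1 - γ) * K₂)) * ‖x - y‖₁ := by
  have hxI := mem_Icc_of_mem_stdSimplex hx
  have hyI := mem_Icc_of_mem_stdSimplex hy
  rw [fd, fd, Md_eq_dampedKernel, Md_eq_dampedKernel]
  refine (l1Norm_vecMul_dampedKernel_sub_le hγ0 hγ1
    (tilt_rows_mem_rowStochastic hC hrow hg₁ hx)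
    (fun i => l1Norm_tilt_comp_sub_tilt_comp_le hg₁ hK₁ (hC i) hxI hyI)
    (l1Norm_tilt_comp_sub_tilt_comp_le hg₂ hK₂ hd hxI hyI) hx hy).trans_eq ?_
  ring

end DampedModel

theorem damped_fd_fixed_points_and_convergence_general {n : ℕ} {C : Matrix (Fin n) (Fin n) ℝ}
    (hC : ∀ i j, 0 ≤ C i j) (hrow : ∀ i, ∃ j, 0 < C i j)
    {d : Fin n → ℝ} (hd : ∀ i, 0 ≤ d i) (hd_pos : ∃ i, 0 < d i)
    {γ : ℝ} (hγ0 : 0 ≤ γ) (hγ1 : γ ≤ 1) {g₁ g₂ : ℝ → ℝ}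
    (hg₁ : ∀ t ∈ Icc (0 : ℝ) 1, 0 < g₁ t) (hg₂ : ∀ t ∈ Icc (0 : ℝ) 1, 0 < g₂ t) :
    (∀ u : (Fin n → ℝ) → (Fin n → ℝ),
      (∀ x ∈ stdSimplex ℝ (Fin n), u x ∈ stdSimplex ℝ (Fin n) ∧
        u x ᵥ* Md C d γ g₁ g₂ x = u x ∧
        ∀ v ∈ stdSimplex ℝ (Fin n), v ᵥ* Md C d γ g₁ g₂ x = v → v = u x) →
      ∀ x ∈ stdSimplex ℝ (Fin n), (u x = x ↔ fd C d γ g₁ g₂ x = x)) ∧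
    ∀ K₁ K₂ : ℝ≥0, LipschitzOnWith K₁ (Real.log ∘ g₁) (Icc 0 1) →
      LipschitzOnWith K₂ (Real.log ∘ g₂) (Icc 0 1) → γ + 2 * (γ * K₁ + (1 - γ) * K₂) < 1 →
      ∃ xs ∈ stdSimplex ℝ (Fin n), fd C d γ g₁ g₂ xs = xs ∧
        (∀ y ∈ stdSimplex ℝ (Fin n), fd C d γ g₁ g₂ y = y → y = xs) ∧
        ∀ x ∈ stdSimplex ℝ (Fin n),
          Tendsto (fun s : ℕ => (fd C d γ g₁ g₂)^[s] x) atTop (𝓝 xs) := by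
  refine ⟨fun u hu x hx => eq_iff_vecMul_eq_of_unique hx (hu x hx).2.1 (hu x hx).2.2,
    fun K₁ K₂ hK₁ hK₂ hK => ?_⟩
  have hne : (stdSimplex ℝ (Fin n)).Nonempty :=
    hd_pos.elim fun i _ => ⟨_, single_mem_stdSimplex ℝ i⟩
  exact exists_fixedPt_tendsto_iterate_of_l1Norm_sub_le (isClosed_stdSimplex ℝ (Fin n)) hne
    (fun x hx => fd_mem_stdSimplex hC hrow hd hγ0 hγ1 hg₁ hg₂ hd_pos hx) hK
    fun x hx y hy => l1Norm_fd_sub_fd_le hC hrow hd hγ0 hγ1 hg₁ hg₂ hK₁ hK₂ hx hy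

theorem damped_fd_fixed_points_and_convergence
    (n : ℕ) (hn : 0 < n) (C : Matrix (Fin n) (Fin n) ℝ)
    (hC0 : ∀ i j, 0 ≤ C i j) (hrow : ∀ i, ∃ j, 0 < C i j)
    (d : Fin n → ℝ) (hd : ∀ i, 0 < d i)
    (γ : ℝ) (hγ0 : 0 < γ) (hγ1 : γ < 1) :
    (∀ g₁ g₁' g₂ g₂' : ℝ → ℝ, IsWeight g₁ g₁' → IsWeight g₂ g₂' →
      ∀ u : (Fin n → ℝ) → (Fin n → ℝ),
        (∀ x ∈ stdSimplex ℝ (Fin n), u x ∈ stdSimplex ℝ (Fin n) ∧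
          Matrix.vecMul (u x) (Md C d γ g₁ g₂ x) = u x ∧
          ∀ v ∈ stdSimplex ℝ (Fin n),
            Matrix.vecMul v (Md C d γ g₁ g₂ x) = v → v = u x) →
        ∀ x ∈ stdSimplex ℝ (Fin n), (u x = x ↔ fd C d γ g₁ g₂ x = x)) ∧
    (∃ ε : ℝ, 0 < ε ∧
      ∀ g₁ g₁' g₂ g₂' : ℝ → ℝ, ∀ Lp₁ Lp₂ : ℝ,
        IsWeight g₁ g₁' → IsWeight g₂ g₂' →
        IsGreatest (ratioSet g₁ g₁') Lp₁ → IsGreatest (ratioSet g₂ g₂') Lp₂ →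
        Lp₁ + Lp₂ ≤ ε →
        ∃ xs ∈ stdSimplex ℝ (Fin n), fd C d γ g₁ g₂ xs = xs ∧
          (∀ y ∈ stdSimplex ℝ (Fin n), fd C d γ g₁ g₂ y = y → y = xs) ∧
          ∀ x ∈ stdSimplex ℝ (Fin n),
            Tendsto (fun s : ℕ => (fd C d γ g₁ g₂)^[s] x) atTop (𝓝 xs)) := by
  have hd_pos : ∃ i, 0 < d i := ⟨⟨0, hn⟩, hd _⟩
  have general {g₁ g₂} := damped_fd_fixed_points_and_convergence_general hC0 hrow
    (fun i => (hd i).le) hd_pos hγ0.le hγ1.le (g₁ := g₁) (g₂ := g₂)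
  refine ⟨fun g₁ _ g₂ _ hg₁ hg₂ => (general hg₁.pos hg₂.pos).1, (1 - γ) / 4, by linarith, ?_⟩
  intro g₁ g₁' g₂ g₂' L₁ L₂ hg₁ hg₂ hL₁ hL₂ hL
  lift L₁ to ℝ≥0 using hg₁.nonneg_of_mem_ratioSet hL₁.1
  lift L₂ to ℝ≥0 using hg₂.nonneg_of_mem_ratioSet hL₂.1
  have hcontr : γ + 2 * (γ * L₁ + (1 - γ) * L₂) < 1 := by nlinarith [L₁.2, L₂.2]
  exact (general hg₁.pos hg₂.pos).2 L₁ L₂ (hg₁.lipschitzOnWith_log hL₁.2)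
    (hg₂.lipschitzOnWith_log hL₂.2) hcontr
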